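/- arXiv:2503.04547 — 3 statements merged into one kernel-verified Lean document; each statement's English description precedes it below -/
import Mathlib

section
/- Let m := p−b−1 ≥ 0 (so p = b+m+1) and let 2 ≤ ℓ ≤ p. Then the trace of the linear endomorphism f ↦ ρ(g·f) of W (i.e., the spherical function value Φ^τ(g) for the hook isotype τ = [N−b,1^b] and the Young subgroup G) equals (1/π_ℓ)·{ Σ_{k=0}^{min(m,ℓ)} ((b+1)_{m−k}/(m−k)!) · e_{ℓ−k}(n_1−1, n_2−1, …, n_ℓ−1) + (−1)^{ℓ+1} · (b−ℓ+1)_m / m! }, where (b−ℓ+1)_m = ∏_{i=0}^{m−1}(b−ℓ+1+i) (an integer, with possibly negative base). -/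
open Finset MvPolynomial

noncomputable section

/-- Value of the elementary symmetric polynomial `e_k` at the family `v` restricted to `A`. -/
def esymVal {α F : Type*} [DecidableEq α] [CommRing F] (A : Finset α) (k : ℕ) (v : α → F) : F :=
  ∑ B ∈ A.powersetCard k, ∏ i ∈ B, v i

/-- Pochhammer symbol `(a)_k = a (a+1) ⋯ (a+k-1)`. -/
def poch (a : ℚ) (k : ℕ) : ℚ := ∏ i ∈ Finset.range k, (a + (i : ℚ))

variable {p : ℕ}

/-- The index in `Fin (∑ t, n t)` of the `i`-th element of the `j`-th consecutive block. -/
def emb (n : Fin p → ℕ) (j : Fin p) (i : Fin (n j)) : Fin (∑ t, n t) :=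
  ⟨(∑ t ∈ Finset.univ.filter (fun t => t < j), n t) + i, by
    have hj : j ∉ Finset.univ.filter (fun t => t < j) := by simp
    have h2 : ∑ t ∈ insert j (Finset.univ.filter (fun t => t < j)), n t ≤ ∑ t, n t :=
      Finset.sum_le_sum_of_subset (Finset.subset_univ _)
    rw [Finset.sum_insert hj] at h2
    have := i.isLt
    omega⟩

/-- The Young subgroup: permutations mapping each block onto itself. -/
def youngGroup (n : Fin p → ℕ) : Finset (Equiv.Perm (Fin (∑ t, n t))) :=
  Finset.univ.filter fun w => ∀ (j : Fin p) (i : Fin (n j)), ∃ i' : Fin (n j),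
    w (emb n j i) = emb n j i'

/-- The action of a permutation of the variables on polynomials, as a linear map. -/
def permAct {σ : Type*} (w : Equiv.Perm σ) :
    MvPolynomial σ ℚ →ₗ[ℚ] MvPolynomial σ ℚ :=
  (MvPolynomial.rename ⇑w).toLinearMap

/-- Averaging operator over the Young subgroup. -/
def rho (n : Fin p → ℕ) :
    MvPolynomial (Fin (∑ t, n t)) ℚ →ₗ[ℚ] MvPolynomial (Fin (∑ t, n t)) ℚ :=
  ((youngGroup n).card : ℚ)⁻¹ • ∑ h ∈ youngGroup n, permAct h

/-- The alternating (Vandermonde) polynomial in the variables `x_{t 0}, …, x_{t b}`. -/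
def Delta {N b : ℕ} (t : Fin (b + 1) → Fin N) : MvPolynomial (Fin N) ℚ :=
  ∏ q ∈ Finset.univ.filter (fun q : Fin (b + 1) × Fin (b + 1) => q.1 < q.2),
    (X (t q.1) - X (t q.2))

/-- The span of all `Δ(x_{i₁},…,x_{i_{b+1}})` with `i₁ < ⋯ < i_{b+1}`. -/
def hookSpan (N b : ℕ) : Submodule ℚ (MvPolynomial (Fin N) ℚ) :=
  Submodule.span ℚ {f | ∃ t : Fin (b + 1) → Fin N, StrictMono t ∧ f = Delta t}

/-- The first `ℓ` block labels. -/
def firstL (p ℓ : ℕ) : Finset (Fin p) := Finset.univ.filter fun i => (i : ℕ) < ℓ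



theorem sum_tuples {ι : Type*} [Fintype ι] [DecidableEq ι] (R : Matrix ι ι ℚ) (b : ℕ) :
    ∑ a : Fin b → ι, (R.submatrix a a).det = (b.factorial : ℚ) *
      ∑ s ∈ (Finset.univ : Finset ι).powersetCard b,
        (R.submatrix (Subtype.val : s → ι) (Subtype.val : s → ι)).det := by
  have h1 : ∑ a : Fin b → ι, (R.submatrix a a).det =
      ∑ a ∈ Finset.univ.filter (fun a : Fin b → ι => Function.Injective a),
        (R.submatrix a a).det := by
    rw [Finset.sum_filter]
    refine Finset.sum_congr rfl fun a _ => ?_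
    split_ifs with h
    · rfl
    · simp only [Function.Injective, not_forall] at h
      obtain ⟨i, j, hij, hne⟩ := h
      exact Matrix.det_zero_of_row_eq hne (by ext k; simp [hij])
  rw [h1, ← Finset.sum_fiberwise_of_maps_to (s := Finset.univ.filter _)
    (t := (Finset.univ : Finset ι).powersetCard b) (g := fun a => Finset.univ.image a),
    Finset.mul_sum]
  · refine Finset.sum_congr rfl fun s hs => ?_
    rw [Finset.mem_powersetCard] at hs
    have h2 : ∀ a ∈ (Finset.univ.filter (fun a : Fin b → ι => Function.Injective a)).filter
        (fun a => Finset.univ.image a = s), (R.submatrix a a).det =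
        (R.submatrix (Subtype.val : s → ι) (Subtype.val : s → ι)).det := by
      intro a ha
      simp only [Finset.mem_filter, Finset.mem_univ, true_and] at ha
      obtain ⟨hinj, him⟩ := ha
      have hm : ∀ i, a i ∈ s := fun i => by rw [← him]; simp
      have hb : Function.Bijective (fun i => (⟨a i, hm i⟩ : s)) := by
        constructor
        · intro i j h; exact hinj (by simpa using h)
        · rintro ⟨x, hx⟩
          rw [← him] at hx
          simp only [Finset.mem_image, Finset.mem_univ, true_and] at hx
          obtain ⟨i, rfl⟩ := hx
          exact ⟨i, rfl⟩
      rw [← Matrix.det_submatrix_equiv_self (Equiv.ofBijective _ hb)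
        (R.submatrix (Subtype.val : s → ι) (Subtype.val : s → ι))]
      rfl
    rw [Finset.sum_congr rfl h2, Finset.sum_const, nsmul_eq_mul]
    congr 2
    have e0 : Fin b ≃ s := Fintype.equivOfCardEq (by simp [hs.2])
    rw [show b.factorial = Fintype.card (Fin b ≃ s) by
      rw [Fintype.card_equiv e0, Fintype.card_fin], ← Finset.card_univ]
    symm
    refine Finset.card_bij (fun e _ => fun i => (e i : ι)) ?_ ?_ ?_
    · intro e _
      simp only [Finset.mem_filter, Finset.mem_univ, true_and]
      refine ⟨fun i j h => e.injective (Subtype.ext h), ?_⟩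
      ext x
      simp only [Finset.mem_image, Finset.mem_univ, true_and]
      constructor
      · rintro ⟨i, rfl⟩; exact (e i).2
      · intro hx; exact ⟨e.symm ⟨x, hx⟩, by simp⟩
    · intro e _ f _ h
      ext i
      exact congrFun h i
    · intro a ha
      simp only [Finset.mem_filter, Finset.mem_univ, true_and] at ha
      obtain ⟨hinj, him⟩ := ha
      have hm : ∀ i, a i ∈ s := fun i => by rw [← him]; simp
      have hb : Function.Bijective (fun i => (⟨a i, hm i⟩ : s)) := by
        constructor
        · intro i j h; exact hinj (by simpa using h)
        · rintro ⟨x, hx⟩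
          rw [← him] at hx
          simp only [Finset.mem_image, Finset.mem_univ, true_and] at hx
          obtain ⟨i, rfl⟩ := hx
          exact ⟨i, rfl⟩
      exact ⟨Equiv.ofBijective _ hb, Finset.mem_univ _, rfl⟩
  · intro a ha
    simp only [Finset.mem_filter, Finset.mem_univ, true_and] at ha
    rw [Finset.mem_powersetCard]
    exact ⟨Finset.subset_univ _, by rw [Finset.card_image_of_injective _ ha]; simp⟩

theorem vand_rec {R : Type*} [CommRing R] {b : ℕ} (c : R) (t : Fin (b + 1) → R) :
    (Matrix.vandermonde t).det = ∑ j : Fin (b + 1), (-1) ^ (j : ℕ) *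
      (Matrix.vandermonde (Fin.cons c (fun i => t (j.succAbove i)) : Fin (b + 1) → R)).det := by
  let y : Fin (b + 2) → R := Fin.cons c t
  let A : Matrix (Fin (b + 2)) (Fin (b + 2)) R := fun s =>
    Fin.cons 1 (fun k : Fin (b + 1) => y s ^ (k : ℕ))
  have hA : ∀ s k, A s (Fin.succ k) = y s ^ (k : ℕ) := fun s k => rfl
  have h0 : A.det = 0 := by
    refine Matrix.det_zero_of_column_eq (i := 0) (j := 1) (by simp) ?_
    intro k
    have : (1 : Fin (b + 2)) = Fin.succ 0 := rfl
    rw [this]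
    simp only [A, Fin.cons_zero, Fin.cons_succ]
    simp
  rw [Matrix.det_succ_column_zero, Fin.sum_univ_succ] at h0
  have h1 : A.submatrix (Fin.succAbove 0) Fin.succ = Matrix.vandermonde t := by
    ext i j
    rw [Matrix.submatrix_apply, hA]
    simp [y, Matrix.vandermonde_apply]
  have h2 : ∀ k : Fin (b + 1), A.submatrix (Fin.succAbove k.succ) Fin.succ =
      Matrix.vandermonde (Fin.cons c (fun i => t (k.succAbove i)) : Fin (b + 1) → R) := by
    intro k
    ext i j
    rw [Matrix.submatrix_apply, hA, Matrix.vandermonde_apply]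
    refine Fin.cases ?_ (fun i => ?_) i
    · simp [y]
    · simp [y]
  rw [h1] at h0
  simp only [h2] at h0
  have h3 : ∀ i, A i 0 = 1 := fun i => rfl
  simp only [h3, Fin.val_zero, pow_zero, one_mul, mul_one, Fin.val_succ, pow_succ, mul_neg,
    neg_mul, Finset.sum_neg_distrib] at h0
  rw [← sub_eq_add_neg, sub_eq_zero] at h0
  exact h0

theorem det_stoch {ι : Type*} [Fintype ι] [DecidableEq ι] (Q : Matrix ι ι ℚ)
    (hQ : ∀ j, ∑ i, Q i j = 1) (c : ι) :
    (1 + (Polynomial.X : Polynomial ℚ) • Q.map Polynomial.C).det =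
      (1 + Polynomial.X) * (1 + (Polynomial.X : Polynomial ℚ) •
        (Matrix.of (fun i j => Q i j - Q i c)).map Polynomial.C).det := by
  set q : Matrix ι ι (Polynomial ℚ) := (Polynomial.X : Polynomial ℚ) • Q.map Polynomial.C with hq
  set r : Matrix ι ι (Polynomial ℚ) := (Polynomial.X : Polynomial ℚ) •
        (Matrix.of (fun i j => Q i j - Q i c)).map Polynomial.C with hr
  have hqs : ∀ j, ∑ i, q i j = Polynomial.X := by
    intro j
    simp only [hq, Matrix.smul_apply, Matrix.map_apply, smul_eq_mul, ← Finset.mul_sum, ← map_sum,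
      hQ, map_one, mul_one]
  have hrq : ∀ i j, r i j = q i j - q i c := by
    intro i j
    simp [hr, hq, mul_sub]
  have key : 1 + q = (1 + Matrix.replicateCol Unit (fun i => q i c) *
      Matrix.replicateRow Unit (fun _ => (1 : Polynomial ℚ))) * (1 + r) := by
    rw [add_mul, one_mul, Matrix.mul_assoc]
    ext1 i j
    simp only [Matrix.add_apply, Matrix.mul_apply, Matrix.replicateCol_apply,
      Matrix.replicateRow_apply, Finset.univ_unique, Finset.sum_singleton, one_mul,
      Finset.sum_add_distrib, hrq, Finset.sum_sub_distrib, hqs]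
    simp [Matrix.one_apply]
    ring
  rw [key, Matrix.det_mul, Matrix.det_one_add_replicateCol_mul_replicateRow]
  congr 2
  simp [dotProduct, hqs]

theorem det_cycle {R : Type*} [CommRing R] {ι : Type*} [Fintype ι] [DecidableEq ι]
    (c : Equiv.Perm ι) (hc : c.IsCycle) (d u : ι → R) :
    (Matrix.of (fun i j => if i = j then d j else if i = c j then u j else 0)).det =
      ∏ j, d j + (Equiv.Perm.sign c : ℤ) • ∏ j, (if c j = j then d j else u j) := by
  rw [Matrix.det_apply]
  have hne : (1 : Equiv.Perm ι) ≠ c := fun h => hc.ne_one h.symm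
  rw [← Finset.sum_subset (Finset.subset_univ ({1, c} : Finset (Equiv.Perm ι))),
    Finset.sum_pair hne]
  · simp [Units.smul_def]
  · intro σ _ hσ
    simp only [Finset.mem_insert, Finset.mem_singleton, not_or] at hσ
    obtain ⟨h1, h2⟩ := hσ
    by_cases hall : ∀ j, σ j = j ∨ σ j = c j
    · exfalso
      have hex : ∃ x, σ x ≠ x := by
        by_contra hh
        push Not at hh
        exact h1 (Equiv.ext hh)
      obtain ⟨x, hx⟩ := hex
      have hx' : σ x = c x := (hall x).resolve_left hx
      have hcx : c x ≠ x := by rw [← hx']; exact hx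
      have hk : ∀ k : ℕ, σ ((c ^ k) x) = c ((c ^ k) x) ∧ c ((c ^ k) x) ≠ (c ^ k) x := by
        intro k
        induction k with
        | zero => exact ⟨by simpa using hx', by simpa using hcx⟩
        | succ k ih =>
          rw [pow_succ', Equiv.Perm.mul_apply]
          have hn : c (c ((c ^ k) x)) ≠ c ((c ^ k) x) := fun h => ih.2 (c.injective h)
          refine ⟨(hall _).resolve_left fun h => ?_, hn⟩
          rw [← ih.1] at h
          have := σ.injective h
          rw [ih.1] at this
          exact ih.2 this
      apply h2
      ext y
      by_cases hy : c y = y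
      · rw [hy]
        rcases hall y with h | h
        · exact h
        · rw [h, hy]
      · obtain ⟨k, _, hk2⟩ := (hc.sameCycle hcx hy).exists_pow_eq'
        rw [← hk2]
        exact (hk k).1
    · push Not at hall
      obtain ⟨j, hj1, hj2⟩ := hall
      rw [Finset.prod_eq_zero (Finset.mem_univ j), smul_zero]
      simp [hj1, hj2]

theorem single_sum_inj {α : Type*} [DecidableEq α] {b : ℕ} (a s : Fin b → α)
    (ha : Function.Injective a) (hs : Function.Injective s)
    (h : ∑ i : Fin b, Finsupp.single (s i) ((i : ℕ) + 1) =
      ∑ i : Fin b, Finsupp.single (a i) ((i : ℕ) + 1)) : ∀ i, a i = s i := by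
  intro i
  have h1 := DFunLike.congr_fun h (s i)
  simp only [Finsupp.finsetSum_apply, Finsupp.single_apply, hs.eq_iff] at h1
  rw [Finset.sum_ite_eq' Finset.univ i (fun i : Fin b => (i : ℕ) + 1)] at h1
  simp only [Finset.mem_univ, if_true] at h1
  have h2 : ∃ k, a k = s i := by
    by_contra hh
    push Not at hh
    simp [hh] at h1
  obtain ⟨k, hk⟩ := h2
  rw [← hk] at h1
  simp only [ha.eq_iff] at h1
  rw [Finset.sum_ite_eq' Finset.univ k (fun i : Fin b => (i : ℕ) + 1)] at h1
  simp only [Finset.mem_univ, if_true] at h1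
  have : i = k := Fin.ext (by omega)
  rw [this, hk, this]

/-- Coefficient functional. -/
def lam {N b : ℕ} (a : Fin b → Fin N) : MvPolynomial (Fin N) ℚ →ₗ[ℚ] ℚ :=
  open Classical in
  if Function.Injective a then
    MvPolynomial.lcoeff ℚ (∑ i : Fin b, Finsupp.single (a i) ((i : ℕ) + 1)) else 0

/-- Vandermonde determinant in the chosen variables. -/
def vnd {N b : ℕ} (t : Fin (b + 1) → Fin N) : MvPolynomial (Fin N) ℚ :=
  (Matrix.vandermonde (fun j => (X (t j) : MvPolynomial (Fin N) ℚ))).det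

/-- Column vector. -/
def kvec {N b : ℕ} (a : Fin b → Fin N) (x : Fin N) : Fin (b + 1) → ℚ :=
  Fin.cons 1 (fun i : Fin b => if a i = x then 1 else 0)

theorem lam_vnd {N b : ℕ} (a : Fin b → Fin N) (t : Fin (b + 1) → Fin N) :
    lam a (vnd t) = (Matrix.of (fun j => kvec a (t j))).det := by
  classical
  unfold lam
  split_ifs with ha
  swap
  · simp only [Function.Injective, not_forall] at ha
    obtain ⟨i, j, hij, hne⟩ := ha
    rw [LinearMap.zero_apply, Matrix.det_zero_of_column_eq (i := i.succ) (j := j.succ)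
      (by simpa using hne)]
    intro k
    simp [kvec, hij]
  by_cases ht : Function.Injective t
  swap
  · simp only [Function.Injective, not_forall] at ht
    obtain ⟨i, j, hij, hne⟩ := ht
    rw [vnd, Matrix.det_zero_of_row_eq hne, Matrix.det_zero_of_row_eq hne, map_zero]
    · ext k; simp [hij]
    · ext k; simp [Matrix.vandermonde_apply, hij]
  rw [vnd, Matrix.det_apply, Matrix.det_apply, map_sum]
  refine Finset.sum_congr rfl fun σ _ => ?_
  rw [Units.smul_def, Units.smul_def, map_zsmul]
  congr 1
  have hs : Function.Injective (fun i : Fin b => t (σ i.succ)) := by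
    intro i j h
    exact Fin.succ_injective _ (σ.injective (ht h))
  have h1 : ∏ i, Matrix.vandermonde (fun j => (X (t j) : MvPolynomial (Fin N) ℚ)) (σ i) i =
      monomial (∑ i : Fin b, Finsupp.single (t (σ i.succ)) ((i : ℕ) + 1)) 1 := by
    rw [Fin.prod_univ_succ, MvPolynomial.monomial_sum_one]
    simp [Matrix.vandermonde_apply, MvPolynomial.X_pow_eq_monomial]
  rw [h1, Fin.prod_univ_succ]
  simp only [kvec, Matrix.of_apply, Fin.cons_zero, Fin.cons_succ, one_mul]
  rw [Finset.prod_boole, MvPolynomial.lcoeff_apply, MvPolynomial.coeff_monomial]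
  by_cases h : ∀ i ∈ (Finset.univ : Finset (Fin b)), a i = t (σ i.succ)
  · rw [if_pos h, if_pos]
    exact Finset.sum_congr rfl fun i _ => by rw [h i (Finset.mem_univ _)]
  · rw [if_neg h, if_neg]
    intro h'
    exact h fun i _ => single_sum_inj a _ ha hs h' i

section Avg
variable {ι κ : Type*} [Fintype ι] [DecidableEq ι] [DecidableEq κ]

/-- block preserving permutations -/
def blkG (β : ι → κ) : Finset (Equiv.Perm ι) := Finset.univ.filter fun w => ∀ a, β (w a) = β a

/-- block -/
def fib (β : ι → κ) (k : κ) : Finset ι := Finset.univ.filter fun a => β a = k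

theorem sum_blkG_mul (β : ι → κ) (w : Equiv.Perm ι) (hw : ∀ a, β (w a) = β a)
    (F : Equiv.Perm ι → ℚ) : ∑ h ∈ blkG β, F (h * w) = ∑ h ∈ blkG β, F h := by
  have hw' : ∀ a, β (w⁻¹ a) = β a := fun a => by
    have := hw (w⁻¹ a); simpa using this.symm
  refine Finset.sum_bij' (fun h _ => h * w) (fun h _ => h * w⁻¹) ?_ ?_ ?_ ?_ ?_
  · intro h hh
    simp only [blkG, Finset.mem_filter, Finset.mem_univ, true_and] at hh ⊢
    intro a; rw [Equiv.Perm.mul_apply, hh, hw]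
  · intro h hh
    simp only [blkG, Finset.mem_filter, Finset.mem_univ, true_and] at hh ⊢
    intro a; rw [Equiv.Perm.mul_apply, hh, hw']
  · intro h _; simp
  · intro h _; simp
  · intro h _; rfl

theorem swap_blk {ι κ : Type*} [DecidableEq ι] (β : ι → κ) (x y : ι) (h : β x = β y) (a : ι) : β (Equiv.swap x y a) = β a := by
  rw [Equiv.swap_apply_def]
  split_ifs with h1 h2
  · rw [h1, h]
  · rw [h2, h]
  · rfl

variable {k : ℕ}

theorem avg_zero (β : ι → κ) (v : ι → Fin k → ℚ) (t : Fin k → ι)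
    (ht : ¬ Function.Injective (fun j => β (t j))) :
    ∑ h ∈ blkG β, (Matrix.of fun j => v (h (t j))).det = 0 := by
  simp only [Function.Injective, not_forall] at ht
  obtain ⟨i, j, hij, hne⟩ := ht
  have h1 := sum_blkG_mul β (Equiv.swap (t i) (t j)) (swap_blk β _ _ hij)
    (fun h => (Matrix.of fun j => v (h (t j))).det)
  by_cases htij : t i = t j
  · refine Finset.sum_eq_zero fun h _ => Matrix.det_zero_of_row_eq hne ?_
    ext l; simp [htij]
  by_cases htt : Function.Injective t
  · have h2 : ∀ h : Equiv.Perm ι,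
        (Matrix.of fun l => v ((h * Equiv.swap (t i) (t j)) (t l))).det =
        - (Matrix.of fun l => v (h (t l))).det := by
      intro h
      have h3 := Matrix.det_permute (Equiv.swap i j) (Matrix.of fun l => v (h (t l)))
      rw [Equiv.Perm.sign_swap hne] at h3
      simp only [Units.val_neg, Units.val_one, Int.cast_neg, Int.cast_one, neg_mul, one_mul] at h3
      rw [← h3]
      congr 1
      ext l m
      simp only [Matrix.of_apply, Matrix.submatrix_apply, id, Equiv.Perm.mul_apply]
      rw [Equiv.swap_apply_def, Equiv.swap_apply_def]
      simp only [htt.eq_iff]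
      split_ifs <;> rfl
    simp only [h2, Finset.sum_neg_distrib] at h1
    linarith
  · simp only [Function.Injective, not_forall] at htt
    obtain ⟨i, j, hij, hne⟩ := htt
    refine Finset.sum_eq_zero fun h _ => Matrix.det_zero_of_row_eq hne ?_
    ext l; simp [hij]

theorem avg_congr (β : ι → κ) (v : ι → Fin k → ℚ) (t s : Fin k → ι)
    (hts : ∀ j, β (s j) = β (t j)) :
    ∑ h ∈ blkG β, (Matrix.of fun j => v (h (s j))).det =
    ∑ h ∈ blkG β, (Matrix.of fun j => v (h (t j))).det := by
  by_cases hinj : Function.Injective (fun j => β (t j))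
  swap
  · rw [avg_zero β v t hinj, avg_zero β v s (by simpa only [hts] using hinj)]
  have key : ∀ S : Finset (Fin k),
      ∑ h ∈ blkG β, (Matrix.of fun j => v (h (S.piecewise s t j))).det =
      ∑ h ∈ blkG β, (Matrix.of fun j => v (h (t j))).det := by
    intro S
    induction S using Finset.induction_on with
    | empty => simp
    | insert i S hi ih =>
      rw [← ih, ← sum_blkG_mul β (Equiv.swap (t i) (s i)) (swap_blk β _ _ (hts i).symm)]
      refine Finset.sum_congr rfl fun h _ => ?_
      congr 1
      ext j l
      simp only [Matrix.of_apply, Equiv.Perm.mul_apply]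
      congr 2
      by_cases hj : j = i
      · subst hj
        simp [Finset.piecewise, hi]
      · have hb : β ((insert i S).piecewise s t j) = β (t j) := by
          unfold Finset.piecewise; split_ifs
          · exact hts j
          · rfl
        have hne : β (t j) ≠ β (t i) := fun h => hj (hinj h)
        rw [Equiv.swap_apply_of_ne_of_ne]
        · simp [Finset.piecewise, hj]
        · intro h; rw [h] at hb; exact hne hb.symm
        · intro h; rw [h, hts] at hb; exact hne hb.symm
  simpa using key Finset.univ

theorem avg_det (β : ι → κ) (v : ι → Fin k → ℚ) (t : Fin k → ι) :
    ∑ h ∈ blkG β, (Matrix.of fun j => v (h (t j))).det = ((blkG β).card : ℚ) *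
      (Matrix.of fun j l => ((fib β (β (t j))).card : ℚ)⁻¹ * ∑ x ∈ fib β (β (t j)), v x l).det := by
  have hcard : ∀ j, ((fib β (β (t j))).card : ℚ) ≠ 0 := by
    intro j
    rw [Nat.cast_ne_zero, ← Nat.pos_iff_ne_zero, Finset.card_pos]
    exact ⟨t j, by simp [fib]⟩
  set A : Fin k → Finset ι := fun j => fib β (β (t j)) with hA
  have h1 : (Matrix.of fun j l => ((fib β (β (t j))).card : ℚ)⁻¹ *
      ∑ x ∈ fib β (β (t j)), v x l).det = (∏ j, ((A j).card : ℚ)⁻¹) *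
        ∑ s ∈ Fintype.piFinset A, (Matrix.of fun j => v (s j)).det := by
    have h2 := (Matrix.detRowAlternating (n := Fin k) (R := ℚ)).toMultilinearMap.map_sum_finset
      (fun _ x => v x) A
    rw [show (∑ s ∈ Fintype.piFinset A, (Matrix.of fun j => v (s j)).det) =
      (Matrix.of fun j => ∑ x ∈ A j, v x).det from h2.symm, ← Matrix.det_mul_column]
    congr 1
    ext j l
    simp [hA]
  rw [h1]
  have h3 : ∀ h ∈ blkG β, ∑ s ∈ Fintype.piFinset A, (Matrix.of fun j => v (h (s j))).det =
      ∑ s ∈ Fintype.piFinset A, (Matrix.of fun j => v (s j)).det := by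
    intro h hh
    simp only [blkG, Finset.mem_filter, Finset.mem_univ, true_and] at hh
    have hh' : ∀ a, β (h⁻¹ a) = β a := fun a => by
      have := hh (h⁻¹ a); simpa using this.symm
    refine Finset.sum_bij' (fun s _ => fun j => h (s j)) (fun s _ => fun j => h⁻¹ (s j))
      ?_ ?_ ?_ ?_ ?_
    · intro s hs
      simp only [Fintype.mem_piFinset, hA, fib, Finset.mem_filter, Finset.mem_univ, true_and]
        at hs ⊢
      intro j; rw [hh, hs]
    · intro s hs
      simp only [Fintype.mem_piFinset, hA, fib, Finset.mem_filter, Finset.mem_univ, true_and]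
        at hs ⊢
      intro j; rw [hh', hs]
    · intro s _; simp
    · intro s _; simp
    · intro s _; rfl
  have h4 : ∑ s ∈ Fintype.piFinset A, ∑ h ∈ blkG β, (Matrix.of fun j => v (h (s j))).det =
      ∑ s ∈ Fintype.piFinset A, ∑ h ∈ blkG β, (Matrix.of fun j => v (h (t j))).det := by
    refine Finset.sum_congr rfl fun s hs => avg_congr β v t s ?_
    simpa [Fintype.mem_piFinset, hA, fib] using hs
  rw [Finset.sum_comm, Finset.sum_congr rfl h3, Finset.sum_const, Finset.sum_const,
    Fintype.card_piFinset] at h4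
  simp only [nsmul_eq_mul, Nat.cast_prod] at h4
  have h5 : (∏ j, ((A j).card : ℚ)) ≠ 0 := Finset.prod_ne_zero_iff.mpr fun j _ => hcard j
  rw [Finset.prod_inv_distrib]
  field_simp
  linarith

end Avg

theorem Delta_eq {N b : ℕ} (t : Fin (b + 1) → Fin N) :
    Delta t = ((-1 : ℚ) ^ (Finset.univ.filter
      (fun q : Fin (b + 1) × Fin (b + 1) => q.1 < q.2)).card) • vnd t := by
  rw [vnd, Matrix.det_vandermonde, Delta]
  have h : ∏ i : Fin (b + 1), ∏ j ∈ Finset.Ioi i, ((X (t j) : MvPolynomial (Fin N) ℚ) - X (t i)) =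
      ∏ q ∈ Finset.univ.filter (fun q : Fin (b + 1) × Fin (b + 1) => q.1 < q.2),
        (X (t q.2) - X (t q.1)) := by
    rw [Finset.prod_filter, Fintype.prod_prod_type]
    refine Finset.prod_congr rfl fun i _ => ?_
    rw [← Finset.prod_filter]
    refine Finset.prod_congr ?_ fun _ _ => rfl
    ext j; simp
  rw [h, MvPolynomial.smul_eq_C_mul, map_pow, map_neg, map_one, ← Finset.prod_const,
    ← Finset.prod_mul_distrib]
  exact Finset.prod_congr rfl fun q _ => by ring

theorem vnd_eq {N b : ℕ} (t : Fin (b + 1) → Fin N) :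
    vnd t = ((-1 : ℚ) ^ (Finset.univ.filter
      (fun q : Fin (b + 1) × Fin (b + 1) => q.1 < q.2)).card) • Delta t := by
  rw [Delta_eq, smul_smul, ← mul_pow]; simp

theorem vnd_perm {N b : ℕ} (t : Fin (b + 1) → Fin N) (σ : Equiv.Perm (Fin (b + 1))) :
    vnd (t ∘ σ) = ((Equiv.Perm.sign σ : ℤ) : ℚ) • vnd t := by
  have := Matrix.det_permute σ (Matrix.vandermonde (fun j => (X (t j) : MvPolynomial (Fin N) ℚ)))
  rw [MvPolynomial.smul_eq_C_mul, map_intCast]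
  exact this

theorem vnd_mem {N b : ℕ} (t : Fin (b + 1) → Fin N) : vnd t ∈ hookSpan N b := by
  by_cases ht : Function.Injective t
  · have h1 : vnd t = ((Equiv.Perm.sign (Tuple.sort t)⁻¹ : ℤ) : ℚ) • vnd (t ∘ Tuple.sort t) := by
      rw [← vnd_perm]
      congr 1
      ext j; simp
    rw [h1, vnd_eq]
    refine Submodule.smul_mem _ _ (Submodule.smul_mem _ _ (Submodule.subset_span ⟨_, ?_, rfl⟩))
    exact (Tuple.monotone_sort t).strictMono_of_injective (ht.comp (Tuple.sort t).injective)
  · simp only [Function.Injective, not_forall] at ht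
    obtain ⟨i, j, hij, hne⟩ := ht
    rw [vnd, Matrix.det_zero_of_row_eq hne]
    · exact Submodule.zero_mem _
    · ext k; simp [Matrix.vandermonde_apply, hij]

theorem permAct_vnd {N b : ℕ} (w : Equiv.Perm (Fin N)) (t : Fin (b + 1) → Fin N) :
    permAct w (vnd t) = vnd (fun j => w (t j)) := by
  simp only [permAct, vnd, AlgHom.toLinearMap_apply, AlgHom.map_det]
  congr 1
  ext1 i j
  simp [Matrix.vandermonde_apply]

theorem kvec_det {N b : ℕ} (a : Fin b → Fin N) (t : Fin (b + 1) → Fin N) :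
    (Matrix.of (fun j => kvec a (t j))).det = ∑ j : Fin (b + 1), (-1) ^ (j : ℕ) *
      ∑ σ : Equiv.Perm (Fin b), ((Equiv.Perm.sign σ : ℤ) : ℚ) *
        if a = (fun i => t (j.succAbove (σ i))) then 1 else 0 := by
  rw [Matrix.det_succ_column_zero]
  refine Finset.sum_congr rfl fun j _ => ?_
  rw [Matrix.det_apply']
  simp only [Matrix.of_apply, kvec, Fin.cons_zero, mul_one, Matrix.submatrix_apply, Fin.cons_succ]
  congr 1
  refine Finset.sum_congr rfl fun σ _ => ?_
  congr 1
  rw [Finset.prod_boole]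
  simp [funext_iff]

theorem vnd_expand {N b : ℕ} (c : Fin N) (t : Fin (b + 1) → Fin N) :
    vnd t = ∑ a : Fin b → Fin N, ((b.factorial : ℚ)⁻¹ * lam a (vnd t)) •
      vnd (Fin.cons c a : Fin (b + 1) → Fin N) := by
  simp only [lam_vnd, kvec_det, mul_smul, ← Finset.smul_sum]
  have h1 : ∀ a : Fin b → Fin N, (∑ j : Fin (b + 1), (-1 : ℚ) ^ (j : ℕ) *
      ∑ σ : Equiv.Perm (Fin b), ((Equiv.Perm.sign σ : ℤ) : ℚ) *
        if a = (fun i => t (j.succAbove (σ i))) then 1 else 0) •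
          vnd (Fin.cons c a : Fin (b + 1) → Fin N) =
      ∑ j : Fin (b + 1), (-1 : ℚ) ^ (j : ℕ) • ∑ σ : Equiv.Perm (Fin b),
        ((Equiv.Perm.sign σ : ℤ) : ℚ) • if a = (fun i => t (j.succAbove (σ i))) then
          vnd (Fin.cons c a : Fin (b + 1) → Fin N) else 0 := by
    intro a
    simp only [Finset.sum_smul, mul_smul, ite_smul, one_smul, zero_smul]
  simp only [h1]
  rw [Finset.sum_comm]
  have h2 : ∀ j : Fin (b + 1), ∑ a : Fin b → Fin N, (-1 : ℚ) ^ (j : ℕ) •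
      ∑ σ : Equiv.Perm (Fin b),
        ((Equiv.Perm.sign σ : ℤ) : ℚ) • (if a = (fun i => t (j.succAbove (σ i))) then
          vnd (Fin.cons c a : Fin (b + 1) → Fin N) else 0) =
      (b.factorial : ℚ) • (-1 : ℚ) ^ (j : ℕ) •
        vnd (Fin.cons c (fun i => t (j.succAbove i)) : Fin (b + 1) → Fin N) := by
    intro j
    rw [← Finset.smul_sum, Finset.sum_comm]
    rw [smul_comm]
    congr 1
    have h3 : ∀ σ : Equiv.Perm (Fin b), ∑ a : Fin b → Fin N,
        ((Equiv.Perm.sign σ : ℤ) : ℚ) • (if a = (fun i => t (j.succAbove (σ i))) then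
          vnd (Fin.cons c a : Fin (b + 1) → Fin N) else 0) =
        vnd (Fin.cons c (fun i => t (j.succAbove i)) : Fin (b + 1) → Fin N) := by
      intro σ
      rw [← Finset.smul_sum, Finset.sum_ite_eq' Finset.univ (fun i => t (j.succAbove (σ i)))]
      simp only [Finset.mem_univ, if_true]
      have h4 : (Fin.cons c (fun i => t (j.succAbove (σ i))) : Fin (b + 1) → Fin N) =
          (Fin.cons c (fun i => t (j.succAbove i)) : Fin (b + 1) → Fin N) ∘
            (Equiv.Perm.decomposeFin.symm (0, σ)) := by
        ext i
        refine Fin.cases ?_ (fun i => ?_) i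
        · simp
        · simp
      rw [h4, vnd_perm, smul_smul, Equiv.Perm.decomposeFin.symm_sign]
      simp only [if_true, one_mul]
      rw [← Int.cast_mul, ← Units.val_mul, Int.units_mul_self]
      simp
    simp only [h3, Finset.sum_const, Finset.card_univ, Fintype.card_perm, Fintype.card_fin]
    rw [← Nat.cast_smul_eq_nsmul ℚ]
  simp only [h2, ← Finset.smul_sum]
  rw [smul_smul, inv_mul_cancel₀ (by positivity), one_smul]
  have := vand_rec (X c : MvPolynomial (Fin N) ℚ) (fun j => X (t j))
  rw [vnd, this]
  refine Finset.sum_congr rfl fun j _ => ?_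
  rw [MvPolynomial.smul_eq_C_mul, map_pow, map_neg, map_one, vnd]
  congr 3
  ext1 i
  refine Fin.cases ?_ (fun i => ?_) i
  · simp
  · simp

theorem expand_mem {N b : ℕ} (c : Fin N) (f : MvPolynomial (Fin N) ℚ) (hf : f ∈ hookSpan N b) :
    f = ∑ a : Fin b → Fin N, ((b.factorial : ℚ)⁻¹ * lam a f) •
      vnd (Fin.cons c a : Fin (b + 1) → Fin N) := by
  induction hf using Submodule.span_induction with
  | mem x hx =>
    obtain ⟨t, -, rfl⟩ := hx
    rw [Delta_eq]
    conv_lhs => rw [vnd_expand c t]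
    rw [Finset.smul_sum]
    refine Finset.sum_congr rfl fun a _ => ?_
    rw [map_smul, smul_smul, smul_eq_mul]
    congr 1; ring
  | zero => simp
  | add x y _ _ hx hy =>
    conv_lhs => rw [hx, hy]
    rw [← Finset.sum_add_distrib]
    refine Finset.sum_congr rfl fun a _ => ?_
    rw [map_add, mul_add, add_smul]
  | smul r x _ hx =>
    conv_lhs => rw [hx]
    rw [Finset.smul_sum]
    refine Finset.sum_congr rfl fun a _ => ?_
    rw [map_smul, smul_smul, smul_eq_mul]
    congr 1; ring

instance hookSpan_finite (N b : ℕ) : Module.Finite ℚ (hookSpan N b) := by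
  refine Module.Finite.span_of_finite ℚ ?_
  refine (Set.finite_range (fun t : Fin (b + 1) → Fin N => Delta t)).subset ?_
  rintro f ⟨t, -, rfl⟩
  exact ⟨t, rfl⟩

theorem trace_expand {N b : ℕ} (c : Fin N) (L : MvPolynomial (Fin N) ℚ →ₗ[ℚ] MvPolynomial (Fin N) ℚ)
    (hW : ∀ f ∈ hookSpan N b, L f ∈ hookSpan N b) :
    LinearMap.trace ℚ (hookSpan N b) (L.restrict hW) =
      (b.factorial : ℚ)⁻¹ * ∑ a : Fin b → Fin N,
        lam a (L (vnd (Fin.cons c a : Fin (b + 1) → Fin N))) := by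
  have h : L.restrict hW = ∑ a : Fin b → Fin N, ((b.factorial : ℚ)⁻¹ •
      (lam a ∘ₗ (hookSpan N b).subtype)).smulRight
        (L.restrict hW ⟨vnd (Fin.cons c a : Fin (b + 1) → Fin N), vnd_mem _⟩) := by
    ext1 ⟨f, hf⟩
    apply Subtype.ext
    change L f = _
    conv_lhs => rw [expand_mem c f hf]
    simp [LinearMap.sum_apply, map_sum, mul_smul]
  rw [h, map_sum, Finset.mul_sum]
  refine Finset.sum_congr rfl fun a _ => ?_
  rw [LinearMap.trace_smulRight]
  simp

theorem det_border {b : ℕ} (Q : Fin (b + 1) → Fin b → ℚ) :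
    (Matrix.of (fun j : Fin (b + 1) => (Fin.cons 1 (Q j) : Fin (b + 1) → ℚ))).det =
      (Matrix.of (fun i j : Fin b => Q j.succ i - Q 0 i)).det := by
  rw [Matrix.det_eq_of_forall_row_eq_smul_add_const
    (B := Matrix.of (fun j : Fin (b + 1) => Fin.cases (Fin.cons 1 (Q 0) : Fin (b + 1) → ℚ)
      (fun j => (Fin.cons 0 (fun i => Q j.succ i - Q 0 i) : Fin (b + 1) → ℚ)) j))
    (fun i => if i = 0 then 0 else 1) 0 (by simp)]
  · rw [Matrix.det_succ_column_zero, Fin.sum_univ_succ]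
    simp only [Matrix.of_apply, Fin.cases_zero, Fin.cases_succ, Fin.cons_zero, mul_zero, zero_mul,
      Finset.sum_const_zero, add_zero, Fin.val_zero, pow_zero, one_mul]
    rw [← Matrix.det_transpose]
    congr 1
  · intro i j
    refine Fin.cases ?_ (fun i => ?_) i
    · simp
    · refine Fin.cases ?_ (fun j => ?_) j
      · simp
      · simp

theorem trace_main {N b : ℕ} {κ : Type*} [DecidableEq κ] (β : Fin N → κ)
    (g : Equiv.Perm (Fin N)) (c : Fin N)
    (L : MvPolynomial (Fin N) ℚ →ₗ[ℚ] MvPolynomial (Fin N) ℚ)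
    (hL : L = (((blkG β).card : ℚ)⁻¹ • ∑ h ∈ blkG β, permAct h).comp (permAct g))
    (hW : ∀ f ∈ hookSpan N b, L f ∈ hookSpan N b)
    (Q : Matrix (Fin N) (Fin N) ℚ)
    (hQ : ∀ x y, Q x y = if β x = β (g y) then ((fib β (β (g y))).card : ℚ)⁻¹ else 0) :
    LinearMap.trace ℚ (hookSpan N b) (L.restrict hW) =
      ((1 + (Polynomial.X : Polynomial ℚ) •
        (Matrix.of (fun i j => Q i j - Q i c)).map Polynomial.C).det).coeff b := by
  rw [trace_expand c, Matrix.coeff_det_one_add_X_smul_eq_sum_minors]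
  have hfac : (b.factorial : ℚ) ≠ 0 := by positivity
  rw [inv_mul_eq_iff_eq_mul₀ hfac, ← sum_tuples]
  refine Finset.sum_congr rfl fun a _ => ?_
  have hG : ((blkG β).card : ℚ) ≠ 0 := by
    rw [Nat.cast_ne_zero, ← Nat.pos_iff_ne_zero, Finset.card_pos]
    exact ⟨1, by simp [blkG]⟩
  rw [hL, LinearMap.comp_apply, permAct_vnd, LinearMap.smul_apply, LinearMap.sum_apply, map_smul,
    map_sum]
  simp only [permAct_vnd, lam_vnd]
  rw [avg_det β (kvec a) (fun j => g ((Fin.cons c a : Fin (b + 1) → Fin N) j)), smul_eq_mul,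
    ← mul_assoc, inv_mul_cancel₀ hG, one_mul]
  have h1 : (Matrix.of fun (j : Fin (b + 1)) l =>
      ((fib β (β (g ((Fin.cons c a : Fin (b + 1) → Fin N) j)))).card : ℚ)⁻¹ *
        ∑ x ∈ fib β (β (g ((Fin.cons c a : Fin (b + 1) → Fin N) j))), kvec a x l) =
      Matrix.of (fun j : Fin (b + 1) => (Fin.cons 1 (fun i => Q (a i)
        ((Fin.cons c a : Fin (b + 1) → Fin N) j)) : Fin (b + 1) → ℚ)) := by
    ext j l
    simp only [Matrix.of_apply]
    generalize (Fin.cons c a : Fin (b + 1) → Fin N) j = y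
    refine Fin.cases ?_ (fun l => ?_) l
    · have : ((fib β (β (g y))).card : ℚ) ≠ 0 := by
        rw [Nat.cast_ne_zero, ← Nat.pos_iff_ne_zero, Finset.card_pos]
        exact ⟨g y, by simp [fib]⟩
      simp [kvec, this]
    · simp only [kvec, Fin.cons_succ, hQ, Finset.sum_ite_eq]
      simp [fib]
  rw [h1, det_border (fun j i => Q (a i) ((Fin.cons c a : Fin (b + 1) → Fin N) j))]
  congr 1

theorem poch_choose (b q : ℕ) :
    poch ((b : ℚ) + 1) q / (Nat.factorial q) = (Nat.choose (b + q) b : ℚ) := by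
  have h : poch ((b : ℚ) + 1) q * (b.factorial : ℚ) = ((b + q).factorial : ℚ) := by
    induction q with
    | zero => simp [poch]
    | succ q ih =>
      rw [← add_assoc, Nat.factorial_succ, Nat.cast_mul, ← ih]
      simp only [poch, Finset.prod_range_succ]
      push_cast; ring
  rw [Nat.cast_add_choose, ← h]
  have h1 : (b.factorial : ℚ) ≠ 0 := by positivity
  have h2 : (q.factorial : ℚ) ≠ 0 := by positivity
  field_simp

theorem poch_neg (m : ℕ) : poch (-(m : ℚ)) m = (-1) ^ m * (m.factorial : ℚ) := by
  rw [poch, ← Finset.prod_range_reflect]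
  have : ∀ j ∈ Finset.range m, (-(m : ℚ) + ((m - 1 - j : ℕ) : ℚ)) = (-1) * ((j + 1 : ℕ) : ℚ) := by
    intro j hj
    rw [Finset.mem_range] at hj
    have h : m = (m - 1 - j) + (j + 1) := by omega
    have h' : (m : ℚ) = ((m - 1 - j : ℕ) : ℚ) + ((j + 1 : ℕ) : ℚ) := by exact_mod_cast h
    rw [h']; ring
  rw [Finset.prod_congr rfl this, Finset.prod_mul_distrib, Finset.prod_const, Finset.card_range,
    ← Finset.prod_range_add_one_eq_factorial]
  push_cast; rfl

open Polynomial in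
theorem coeff_tail (p b ℓ : ℕ) (hm : b + 1 ≤ p) (hℓp : ℓ ≤ p) :
    (((1 + Polynomial.X : Polynomial ℚ) ^ (p - ℓ) *
      ∑ i ∈ Finset.range ℓ, (-Polynomial.X) ^ i).coeff b) =
    (if ℓ ≤ p - b - 1 then (Nat.choose (p - 1 - ℓ) b : ℚ) else 0) +
      (-1 : ℚ) ^ (ℓ + 1) * poch ((b : ℚ) - (ℓ : ℚ) + 1) (p - b - 1)
              / (Nat.factorial (p - b - 1)) := by
  have hfac : ((p - b - 1).factorial : ℚ) ≠ 0 := by positivity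
  rcases Nat.eq_or_lt_of_le hℓp with rfl | hlt
  · rw [if_neg (by omega), Nat.sub_self, pow_zero, one_mul, zero_add]
    have h1 : ((b : ℚ) - (ℓ : ℚ) + 1) = -((ℓ - b - 1 : ℕ) : ℚ) := by
      have : ℓ = (ℓ - b - 1) + b + 1 := by omega
      have h' : (ℓ : ℚ) = ((ℓ - b - 1 : ℕ) : ℚ) + b + 1 := by exact_mod_cast this
      rw [h']; ring
    rw [h1, poch_neg, ← mul_assoc, mul_div_assoc, div_self hfac, mul_one, ← pow_add,
      Polynomial.finsetSum_coeff]
    have h2 : ∀ i ∈ Finset.range ℓ, ((-Polynomial.X : Polynomial ℚ) ^ i).coeff b =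
        if b = i then (-1 : ℚ) ^ i else 0 := by
      intro i _
      rw [neg_pow, ← Polynomial.C_1, ← Polynomial.C_neg, ← Polynomial.C_pow,
        Polynomial.coeff_C_mul, Polynomial.coeff_X_pow]
      simp
    rw [Finset.sum_congr rfl h2, Finset.sum_ite_eq, if_pos (by rw [Finset.mem_range]; omega),
      show ℓ + 1 + (ℓ - b - 1) = b + 2 * (ℓ - b) by omega, pow_add, pow_mul]
    simp
  · obtain ⟨s, hs⟩ : ∃ s, p - ℓ = s + 1 := ⟨p - ℓ - 1, by omega⟩
    have h0 : (1 + Polynomial.X : Polynomial ℚ) * ∑ i ∈ Finset.range ℓ, (-Polynomial.X) ^ i =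
        1 - (-Polynomial.X) ^ ℓ := by
      rw [← mul_neg_geom_sum (-Polynomial.X : Polynomial ℚ) ℓ, sub_neg_eq_add]
    rw [hs, pow_succ, mul_assoc, h0, mul_sub, mul_one, Polynomial.coeff_sub,
      Polynomial.coeff_one_add_X_pow, neg_pow, ← mul_assoc, Polynomial.coeff_mul_X_pow',
      mul_comm _ ((-1 : Polynomial ℚ) ^ ℓ), ← Polynomial.C_1, ← Polynomial.C_neg,
      ← Polynomial.C_pow, Polynomial.coeff_C_mul, Polynomial.C_1, Polynomial.coeff_one_add_X_pow,
      show p - 1 - ℓ = s by omega]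
    have h1 : (if ℓ ≤ p - b - 1 then (Nat.choose s b : ℚ) else 0) = (Nat.choose s b : ℚ) := by
      split_ifs with h
      · rfl
      · rw [Nat.choose_eq_zero_of_lt (by omega)]; simp
    rw [h1, sub_eq_add_neg]
    congr 1
    split_ifs with h
    · have h2 : ((b : ℚ) - (ℓ : ℚ) + 1) = ((b - ℓ : ℕ) : ℚ) + 1 := by
        rw [Nat.cast_sub h]
      rw [h2, mul_div_assoc, poch_choose, show b - ℓ + (p - b - 1) = s by omega, pow_succ]
      ring
    · have h2 : poch ((b : ℚ) - (ℓ : ℚ) + 1) (p - b - 1) = 0 := by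
        rw [poch, Finset.prod_eq_zero (i := ℓ - b - 1)]
        · rw [Finset.mem_range]; omega
        · have : ℓ = (ℓ - b - 1) + b + 1 := by omega
          have h' : (ℓ : ℚ) = ((ℓ - b - 1 : ℕ) : ℚ) + b + 1 := by exact_mod_cast this
          rw [h']
          push_cast
          ring_nf
      rw [h2]; simp

theorem card_firstL (p ℓ : ℕ) (h : ℓ ≤ p) : (firstL p ℓ).card = ℓ := by
  have : firstL p ℓ = (Finset.univ : Finset (Fin ℓ)).map (Fin.castLEEmb h) := by
    ext i
    simp only [firstL, Finset.mem_filter, Finset.mem_univ, true_and, Finset.mem_map]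
    constructor
    · intro hi; exact ⟨⟨i, hi⟩, rfl⟩
    · rintro ⟨j, rfl⟩; exact j.2
  rw [this, Finset.card_map, Finset.card_univ, Fintype.card_fin]

theorem esym_gen {α : Type*} [DecidableEq α] (A : Finset α) (v : α → ℚ) (y : Polynomial ℚ) :
    ∏ i ∈ A, (Polynomial.C (v i) * y + 1) =
      1 + y * ∑ j ∈ Finset.range A.card, Polynomial.C (esymVal A (j + 1) v) * y ^ j := by
  rw [Finset.prod_add_one, Finset.sum_powerset, Finset.sum_range_succ', add_comm]
  congr 1
  · simp
  · rw [Finset.mul_sum]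
    refine Finset.sum_congr rfl fun j _ => ?_
    rw [esymVal, map_sum, Finset.sum_mul, Finset.mul_sum]
    refine Finset.sum_congr rfl fun B hB => ?_
    rw [Finset.mem_powersetCard] at hB
    rw [Finset.prod_mul_distrib, Finset.prod_const, hB.2, map_prod]
    ring

theorem final_coeff (p b ℓ : ℕ) (n : Fin p → ℕ) (hn : ∀ j, 0 < n j)
    (hm : b + 1 ≤ p) (hℓ2 : 2 ≤ ℓ) (hℓp : ℓ ≤ p) (D : Polynomial ℚ)
    (hD : (1 + Polynomial.X) * D = (1 + Polynomial.X) ^ (p - ℓ) *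
      (∏ k ∈ firstL p ℓ, (1 + Polynomial.X * Polynomial.C (((n k : ℚ) - 1) * (n k : ℚ)⁻¹)) +
        (-1) ^ (ℓ - 1) * ∏ k ∈ firstL p ℓ, (Polynomial.X * Polynomial.C ((n k : ℚ)⁻¹)))) :
    D.coeff b = (∏ i ∈ firstL p ℓ, (n i : ℚ))⁻¹ *
        ((∑ k ∈ Finset.range (min (p - b - 1) ℓ + 1),
            poch ((b : ℚ) + 1) (p - b - 1 - k) / (Nat.factorial (p - b - 1 - k)) *
              esymVal (firstL p ℓ) (ℓ - k) (fun i => (n i : ℚ) - 1))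
          + (-1 : ℚ) ^ (ℓ + 1) * poch ((b : ℚ) - (ℓ : ℚ) + 1) (p - b - 1)
              / (Nat.factorial (p - b - 1))) := by
  set A := firstL p ℓ with hA
  have hAc : A.card = ℓ := card_firstL p ℓ hℓp
  set v : Fin p → ℚ := fun i => (n i : ℚ) - 1 with hv
  set y : Polynomial ℚ := 1 + Polynomial.X with hy
  have hy0 : y ≠ 0 := by
    intro h
    have := congrArg (Polynomial.coeff · 0) h
    simp [hy] at this
  have e1 : ∏ k ∈ A, (1 + Polynomial.X * Polynomial.C (((n k : ℚ) - 1) * (n k : ℚ)⁻¹)) =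
      Polynomial.C ((∏ i ∈ A, (n i : ℚ))⁻¹) * ∏ k ∈ A, (Polynomial.C (v k) * y + 1) := by
    rw [← Finset.prod_inv_distrib, map_prod, ← Finset.prod_mul_distrib]
    refine Finset.prod_congr rfl fun k _ => ?_
    have hnk : (n k : ℚ) ≠ 0 := by exact_mod_cast (hn k).ne'
    have h1 : Polynomial.C ((n k : ℚ)⁻¹) * Polynomial.C (n k : ℚ) = 1 := by
      rw [← Polynomial.C_mul, inv_mul_cancel₀ hnk, Polynomial.C_1]
    simp only [hv, hy, Polynomial.C_mul, Polynomial.C_sub, Polynomial.C_1]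
    linear_combination -h1
  have e2 : ∏ k ∈ A, (Polynomial.X * Polynomial.C ((n k : ℚ)⁻¹)) =
      Polynomial.C ((∏ i ∈ A, (n i : ℚ))⁻¹) * Polynomial.X ^ ℓ := by
    rw [Finset.prod_mul_distrib, Finset.prod_const, hAc, ← Finset.prod_inv_distrib, map_prod]
    ring
  have h0 : y * ∑ i ∈ Finset.range ℓ, (-Polynomial.X : Polynomial ℚ) ^ i =
      1 - (-Polynomial.X) ^ ℓ := by
    rw [← mul_neg_geom_sum (-Polynomial.X : Polynomial ℚ) ℓ, sub_neg_eq_add]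
  have hsg : ((-1 : Polynomial ℚ)) ^ (ℓ - 1) * Polynomial.X ^ ℓ = - (-Polynomial.X) ^ ℓ := by
    obtain ⟨q, rfl⟩ : ∃ q, ℓ = q + 1 := ⟨ℓ - 1, by omega⟩
    rw [neg_pow (Polynomial.X : Polynomial ℚ), Nat.add_sub_cancel, pow_succ (-1 : Polynomial ℚ)]
    ring
  have hD2 : D = Polynomial.C ((∏ i ∈ A, (n i : ℚ))⁻¹) *
      (∑ j ∈ Finset.range ℓ, Polynomial.C (esymVal A (j + 1) v) * y ^ (p - ℓ + j) +
        y ^ (p - ℓ) * ∑ i ∈ Finset.range ℓ, (-Polynomial.X : Polynomial ℚ) ^ i) := by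
    apply mul_left_cancel₀ hy0
    rw [hD, e1, e2, esym_gen, hAc]
    have h3 : ∑ j ∈ Finset.range ℓ, Polynomial.C (esymVal A (j + 1) v) * y ^ (p - ℓ + j) =
        y ^ (p - ℓ) * ∑ j ∈ Finset.range ℓ, Polynomial.C (esymVal A (j + 1) v) * y ^ j := by
      rw [Finset.mul_sum]
      exact Finset.sum_congr rfl fun j _ => by rw [pow_add]; ring
    rw [h3]
    linear_combination (Polynomial.C ((∏ i ∈ A, (n i : ℚ))⁻¹) * y ^ (p - ℓ)) * (hsg - h0)
  rw [hD2, Polynomial.coeff_C_mul, Polynomial.coeff_add, coeff_tail p b ℓ hm hℓp, ← add_assoc]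
  congr 2
  rw [Polynomial.finsetSum_coeff]
  simp only [Polynomial.coeff_C_mul, hy, Polynomial.coeff_one_add_X_pow]
  rw [← Finset.sum_range_reflect]
  have h5 : ∑ k ∈ Finset.range (min (p - b - 1) ℓ + 1),
            poch ((b : ℚ) + 1) (p - b - 1 - k) / (Nat.factorial (p - b - 1 - k)) *
              esymVal A (ℓ - k) v =
      ∑ k ∈ Finset.range (ℓ + 1), if k ≤ p - b - 1 then
        (Nat.choose (p - 1 - k) b : ℚ) * esymVal A (ℓ - k) v else 0 := by
    rw [← Finset.sum_filter]
    refine Finset.sum_congr ?_ ?_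
    · ext k; simp only [Finset.mem_range, Finset.mem_filter]; omega
    · intro k hk
      simp only [Finset.mem_range, Finset.mem_filter] at hk
      rw [poch_choose, show b + (p - b - 1 - k) = p - 1 - k by omega]
  rw [h5, Finset.sum_range_succ]
  congr 1
  · refine Finset.sum_congr rfl fun k hk => ?_
    rw [Finset.mem_range] at hk
    rw [show ℓ - 1 - k + 1 = ℓ - k by omega, show p - ℓ + (ℓ - 1 - k) = p - 1 - k by omega,
      mul_comm]
    split_ifs with h
    · rfl
    · rw [Nat.choose_eq_zero_of_lt (by omega)]; simp
  · simp [esymVal]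

theorem emb_eq (n : Fin p → ℕ) (j : Fin p) (i : Fin (n j)) :
    emb n j i = finSigmaFinEquiv ⟨j, i⟩ := by
  apply Fin.ext
  rw [finSigmaFinEquiv_apply]
  simp only [emb]
  congr 1
  symm
  refine Finset.sum_bij (fun i _ => Fin.castLE j.2.le i) ?_ ?_ ?_ ?_
  · intro a _
    simp only [Finset.mem_filter, Finset.mem_univ, true_and]
    exact a.2
  · intro a _ a' _ h
    exact Fin.castLE_injective _ h
  · intro t ht
    simp only [Finset.mem_filter, Finset.mem_univ, true_and] at ht
    exact ⟨⟨t, ht⟩, Finset.mem_univ _, rfl⟩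
  · intro a _; rfl

/-- The block label of an index. -/
def blk (n : Fin p → ℕ) (a : Fin (∑ t, n t)) : Fin p := (finSigmaFinEquiv.symm a).1

theorem blk_emb (n : Fin p → ℕ) (j : Fin p) (i : Fin (n j)) : blk n (emb n j i) = j := by
  rw [emb_eq, blk, Equiv.symm_apply_apply]

theorem emb_blk (n : Fin p → ℕ) (a : Fin (∑ t, n t)) : ∃ i, a = emb n (blk n a) i := by
  refine ⟨(finSigmaFinEquiv.symm a).2, ?_⟩
  have h := emb_eq n (finSigmaFinEquiv.symm a).1 (finSigmaFinEquiv.symm a).2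
  rw [Sigma.eta, Equiv.apply_symm_apply] at h
  exact h.symm

theorem emb_inj (n : Fin p → ℕ) {j j' : Fin p} {i : Fin (n j)} {i' : Fin (n j')}
    (h : emb n j i = emb n j' i') : j = j' ∧ (i : ℕ) = i' := by
  rw [emb_eq, emb_eq, EmbeddingLike.apply_eq_iff_eq, Sigma.mk.injEq] at h
  obtain ⟨rfl, h⟩ := h
  exact ⟨rfl, by rw [eq_of_heq h]⟩

theorem young_eq (n : Fin p → ℕ) : youngGroup n = blkG (blk n) := by
  ext w
  simp only [youngGroup, blkG, Finset.mem_filter, Finset.mem_univ, true_and]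
  constructor
  · intro h a
    obtain ⟨i, hi⟩ := emb_blk n a
    obtain ⟨i', hi'⟩ := h (blk n a) i
    rw [← hi] at hi'
    rw [hi', blk_emb]
  · intro h j i
    obtain ⟨i', hi'⟩ := emb_blk n (w (emb n j i))
    have h2 : blk n (w (emb n j i)) = j := by rw [h, blk_emb]
    generalize w (emb n j i) = z at *
    subst h2
    exact ⟨i', hi'⟩

theorem sum_blocks (n : Fin p → ℕ) (F : Fin (∑ t, n t) → ℚ) :
    ∑ a, F a = ∑ j, ∑ i, F (emb n j i) := by
  rw [← Equiv.sum_comp finSigmaFinEquiv F, Fintype.sum_sigma]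
  simp only [emb_eq]

theorem card_fib (n : Fin p → ℕ) (j : Fin p) : ((fib (blk n) j).card : ℚ) = n j := by
  have h : ((fib (blk n) j).card : ℚ) = ∑ a, if blk n a = j then (1 : ℚ) else 0 := by
    simp [fib]
  rw [h, sum_blocks]
  simp only [blk_emb]
  simp

theorem det_BK_comm {ι κ : Type*} [Fintype ι] [DecidableEq ι] [Fintype κ] [DecidableEq κ]
    (B : Matrix ι κ ℚ) (K : Matrix κ ι ℚ) :
    (1 + (Polynomial.X : Polynomial ℚ) • (B * K).map Polynomial.C).det =
      (1 + (Polynomial.X : Polynomial ℚ) • (K * B).map Polynomial.C).det := by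
  rw [Matrix.map_mul, Matrix.map_mul, ← Matrix.smul_mul, Matrix.det_one_add_mul_comm,
    Matrix.mul_smul]

set_option maxHeartbeats 2000000

/-- Main theorem (formula (1.1) of the paper): the spherical function value for the hook
isotype `[N-b,1^b]`, i.e. the trace of `f ↦ ρ(g·f)` on `W`, for any `2 ≤ ℓ ≤ p`. -/
theorem sphericalFunction_hook (p b ℓ : ℕ) (n : Fin p → ℕ) (hn : ∀ j, 0 < n j)
    (hm : b + 1 ≤ p) (hℓ2 : 2 ≤ ℓ) (hℓp : ℓ ≤ p)
    (g : Equiv.Perm (Fin (∑ t, n t)))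
    (hg1 : ∀ j k : Fin p, (k : ℕ) = (j : ℕ) + 1 → (k : ℕ) < ℓ →
      g (emb n j ⟨0, hn j⟩) = emb n k ⟨0, hn k⟩)
    (hg2 : ∀ j j' : Fin p, (j : ℕ) = ℓ - 1 → (j' : ℕ) = 0 →
      g (emb n j ⟨0, hn j⟩) = emb n j' ⟨0, hn j'⟩)
    (hg3 : ∀ a, (∀ j : Fin p, (j : ℕ) < ℓ → a ≠ emb n j ⟨0, hn j⟩) → g a = a)
    (hW : ∀ f ∈ hookSpan (∑ t, n t) b,
      ((rho n).comp (permAct g)) f ∈ hookSpan (∑ t, n t) b) :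
    LinearMap.trace ℚ (hookSpan (∑ t, n t) b) (((rho n).comp (permAct g)).restrict hW)
      = (∏ i ∈ firstL p ℓ, (n i : ℚ))⁻¹ *
        ((∑ k ∈ Finset.range (min (p - b - 1) ℓ + 1),
            poch ((b : ℚ) + 1) (p - b - 1 - k) / (Nat.factorial (p - b - 1 - k)) *
              esymVal (firstL p ℓ) (ℓ - k) (fun i => (n i : ℚ) - 1))
          + (-1 : ℚ) ^ (ℓ + 1) * poch ((b : ℚ) - (ℓ : ℚ) + 1) (p - b - 1)
              / (Nat.factorial (p - b - 1))) := by
  have hp : 0 < p := by omega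
  have : NeZero p := ⟨by omega⟩
  let c0 : Fin p := ⟨ℓ - 1, by omega⟩
  have hc0 : c0 ≠ 0 := by
    intro h
    have := congrArg Fin.val h
    simp [c0] at this
    omega
  set c : Equiv.Perm (Fin p) := Fin.cycleRange c0 with hc
  have hcyc : c.IsCycle := Fin.isCycle_cycleRange hc0
  have hc_ge : ∀ k : Fin p, ¬ (k : ℕ) < ℓ → c k = k := by
    intro k hk
    refine Fin.cycleRange_of_gt ?_
    rw [Fin.lt_def]
    simp only [c0]
    omega
  have hg_first : ∀ k : Fin p, (k : ℕ) < ℓ →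
      g (emb n k ⟨0, hn k⟩) = emb n (c k) ⟨0, hn (c k)⟩ ∧ c k ≠ k := by
    intro k hk
    by_cases hk' : (k : ℕ) = ℓ - 1
    · have h1 : c k = 0 := by
        have : k = c0 := Fin.ext hk'
        rw [this, hc, Fin.cycleRange_self]
      refine ⟨hg2 k (c k) hk' (by rw [h1]; rfl), ?_⟩
      rw [h1]
      intro h
      rw [← h] at hk'
      simp at hk'
      omega
    · have h1 : ((c k : Fin p) : ℕ) = k + 1 := by
        refine Fin.coe_cycleRange_of_lt ?_
        rw [Fin.lt_def]
        simp only [c0]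
        omega
      refine ⟨hg1 k (c k) h1 (by omega), ?_⟩
      intro h
      have := congrArg Fin.val h
      omega
  have hblk : ∀ (k : Fin p) (i : Fin (n k)), blk n (g (emb n k i)) =
      if i = ⟨0, hn k⟩ then c k else k := by
    intro k i
    by_cases hk : (k : ℕ) < ℓ
    · split_ifs with hi
      · rw [hi, (hg_first k hk).1, blk_emb]
      · rw [hg3, blk_emb]
        intro j _ h
        obtain ⟨rfl, h2⟩ := emb_inj n h
        exact hi (Fin.ext h2)
    · rw [hg3, blk_emb, hc_ge k hk, ite_self]
      intro j hj h
      obtain ⟨rfl, h2⟩ := emb_inj n h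
      exact hk hj
  obtain ⟨B, hB⟩ : ∃ B : Matrix (Fin (∑ t, n t)) (Fin p) ℚ,
      ∀ x j, B x j = if blk n x = j then (n j : ℚ)⁻¹ else 0 := ⟨fun x j => _, fun _ _ => rfl⟩
  obtain ⟨K, hK⟩ : ∃ K : Matrix (Fin p) (Fin (∑ t, n t)) ℚ,
      ∀ j y, K j y = if blk n (g y) = j then 1 else 0 := ⟨fun j y => _, fun _ _ => rfl⟩
  have hn0 : ∀ j, (n j : ℚ) ≠ 0 := fun j => by exact_mod_cast (hn j).ne'
  have hQ : ∀ x y, (B * K) x y = if blk n x = blk n (g y) then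
      ((fib (blk n) (blk n (g y))).card : ℚ)⁻¹ else 0 := by
    intro x y
    rw [Matrix.mul_apply]
    simp only [hB, hK, mul_ite, mul_one, mul_zero, Finset.sum_ite_eq,
      Finset.mem_univ, if_true, card_fib]
  have hQs : ∀ y, ∑ x, (B * K) x y = 1 := by
    intro y
    simp only [hQ, card_fib]
    rw [sum_blocks]
    simp only [blk_emb]
    simp [hn0]
  have hKB : ∀ j k, (K * B) j k = (n k : ℚ)⁻¹ *
      ((n k : ℚ) * (if j = k then 1 else 0) +
        ((if j = c k then 1 else 0) - (if j = k then 1 else 0))) := by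
    intro j k
    rw [Matrix.mul_apply, sum_blocks]
    simp only [hB, blk_emb, mul_ite, mul_zero]
    rw [Finset.sum_eq_single k]
    · simp only [if_true, hK, hblk, ← Finset.sum_mul]
      rw [mul_comm]
      congr 1
      have : ∀ i : Fin (n k), (if (if i = ⟨0, hn k⟩ then c k else k) = j then (1 : ℚ) else 0) =
          (if j = k then 1 else 0) + (if i = ⟨0, hn k⟩ then
            ((if j = c k then 1 else 0) - (if j = k then 1 else 0)) else 0) := by
        intro i
        simp only [eq_comm (a := j)]
        split_ifs <;> simp_all
      simp only [this, Finset.sum_add_distrib, Finset.sum_ite_eq', Finset.mem_univ, if_true]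
      simp
    · intro k' _ hk'
      simp [hk']
    · simp
  have hM : (1 + (Polynomial.X : Polynomial ℚ) • (K * B).map Polynomial.C) =
      Matrix.of (fun i j : Fin p => if i = j then
        (if (j : ℕ) < ℓ then 1 + Polynomial.X * Polynomial.C (((n j : ℚ) - 1) * (n j : ℚ)⁻¹)
          else 1 + Polynomial.X)
        else if i = c j then Polynomial.X * Polynomial.C ((n j : ℚ)⁻¹) else 0) := by
    ext1 j k
    simp only [Matrix.add_apply, Matrix.smul_apply, Matrix.map_apply, hKB, Matrix.of_apply,
      Matrix.one_apply, smul_eq_mul]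
    by_cases hk : (k : ℕ) < ℓ
    · have hck := (hg_first k hk).2
      by_cases hjk : j = k
      · subst hjk
        simp only [if_true, hk, if_neg hck.symm]
        congr 3
        ring
      · simp only [hjk, if_false]
        split_ifs <;> simp
    · rw [hc_ge k hk]
      by_cases hjk : j = k
      · simp [hjk, hk, hn0]
      · simp [hjk]
  have hdet := det_stoch (B * K) hQs (emb n ⟨0, hp⟩ ⟨0, hn _⟩)
  have hcomm := det_BK_comm B K
  rw [hcomm, hM, det_cycle c hcyc] at hdet
  rw [trace_main (blk n) g (emb n ⟨0, hp⟩ ⟨0, hn _⟩) ((rho n).comp (permAct g))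
    (by rw [rho, young_eq]) hW (B * K) hQ]
  refine final_coeff p b ℓ n hn hm hℓ2 hℓp _ ?_
  rw [← hdet]
  have hcard2 : (Finset.univ.filter (fun i : Fin p => ¬ (i : ℕ) < ℓ)).card = p - ℓ := by
    have h1 := Finset.card_filter_add_card_filter_not (s := (Finset.univ : Finset (Fin p)))
      (fun i : Fin p => (i : ℕ) < ℓ)
    have h2 := card_firstL p ℓ hℓp
    rw [firstL] at h2
    rw [h2, Finset.card_univ, Fintype.card_fin] at h1
    omega
  have hprod2 : ∀ j : Fin p, (if c j = j then
      (if (j : ℕ) < ℓ then 1 + Polynomial.X * Polynomial.C (((n j : ℚ) - 1) * (n j : ℚ)⁻¹)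
          else 1 + Polynomial.X) else Polynomial.X * Polynomial.C ((n j : ℚ)⁻¹)) =
      if (j : ℕ) < ℓ then Polynomial.X * Polynomial.C ((n j : ℚ)⁻¹) else 1 + Polynomial.X := by
    intro j
    by_cases hj : (j : ℕ) < ℓ
    · simp [hj, (hg_first j hj).2]
    · simp [hj, hc_ge j hj]
  simp only [hprod2]
  rw [Finset.prod_ite, Finset.prod_ite, Finset.prod_const, hcard2, hc, Fin.sign_cycleRange]
  simp only [firstL, c0, zsmul_eq_mul]
  push_cast
  ring
end
end

section
/- Let R be a commutative ring, b ≥ 0, and x_1,…,x_{b+2} ∈ R. For 1 ≤ j ≤ b+2 let f_j := ∏_{1≤i<k≤b+2, i≠j, k≠j} (x_i − x_k), the Vandermonde product of the b+1 elements obtained by deleting x_j from the list x_1,…,x_{b+2}. Then Σ_{j=1}^{b+2} (−1)^j f_j = 0. -/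
/-- The Vandermonde determinant after deleting an entry, as a product over index pairs. -/
lemma det_deleted_eq {R : Type*} [CommRing R] (b : ℕ) (x : ℕ → R) (j : Fin (b + 2)) :
    (Matrix.vandermonde (fun i : Fin (b + 1) => - x ((j.succAbove i : ℕ) + 1))).det =
      ∏ q ∈ ((Finset.Icc 1 (b + 2)) ×ˢ (Finset.Icc 1 (b + 2))).filter
          (fun q => q.1 < q.2 ∧ q.1 ≠ (j : ℕ) + 1 ∧ q.2 ≠ (j : ℕ) + 1),
        (x q.1 - x q.2) := by
  rw [Matrix.det_vandermonde, Finset.prod_sigma']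
  refine Finset.prod_bij
    (fun p _ => ((j.succAbove p.1 : ℕ) + 1, (j.succAbove p.2 : ℕ) + 1)) ?_ ?_ ?_ ?_
  · rintro ⟨i, k⟩ h
    have hik : i < k := by simpa using h
    have h1 : j.succAbove i < j.succAbove k := Fin.succAbove_lt_succAbove_iff.2 hik
    have h2 := Fin.val_ne_of_ne (Fin.succAbove_ne j i)
    have h3 := Fin.val_ne_of_ne (Fin.succAbove_ne j k)
    have h4 := (j.succAbove i).isLt
    have h5 := (j.succAbove k).isLt
    rw [Fin.lt_def] at h1
    simp only [Finset.mem_filter, Finset.mem_product, Finset.mem_Icc]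
    omega
  · rintro ⟨i, k⟩ _ ⟨i', k'⟩ _ h
    simp only [Prod.mk.injEq, Nat.add_right_cancel_iff, Fin.val_inj,
      Fin.succAbove_right_inj] at h
    rw [h.1, h.2]
  · rintro ⟨p, q⟩ h
    simp only [Finset.mem_filter, Finset.mem_product, Finset.mem_Icc] at h
    obtain ⟨i, hi⟩ := Fin.exists_succAbove_eq (x := (⟨p - 1, by omega⟩ : Fin (b + 2))) (y := j)
      (by intro e; have := congrArg Fin.val e; simp only at this; omega)
    obtain ⟨k, hk⟩ := Fin.exists_succAbove_eq (x := (⟨q - 1, by omega⟩ : Fin (b + 2))) (y := j)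
      (by intro e; have := congrArg Fin.val e; simp only at this; omega)
    refine ⟨⟨i, k⟩, ?_, ?_⟩
    · have : j.succAbove i < j.succAbove k := by
        rw [hi, hk, Fin.lt_def]; simp only; omega
      simpa using Fin.succAbove_lt_succAbove_iff.1 this
    · simp only [hi, hk, Prod.mk.injEq]; omega
  · rintro ⟨i, k⟩ _
    ring

/-- Lemma 3.2: for arbitrary `x_1,…,x_{b+2}` in a commutative ring, the alternating sum of the
Vandermonde products `f_j` of the `b+1` elements obtained by deleting `x_j` vanishes. -/
theorem alternating_sum_vandermonde {R : Type*} [CommRing R] (b : ℕ) (x : ℕ → R) :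
    ∑ j ∈ Finset.Icc 1 (b + 2), (-1 : R) ^ j *
      ∏ q ∈ ((Finset.Icc 1 (b + 2)) ×ˢ (Finset.Icc 1 (b + 2))).filter
          (fun q => q.1 < q.2 ∧ q.1 ≠ j ∧ q.2 ≠ j),
        (x q.1 - x q.2) = 0 := by
  let M : Matrix (Fin (b + 2)) (Fin (b + 2)) R :=
    Matrix.of fun i k => (- x ((i : ℕ) + 1)) ^ ((k : ℕ) - 1)
  have hM : M.det = 0 := by
    refine Matrix.det_zero_of_column_eq (i := 0) (j := 1) (by simp) ?_
    intro k
    simp [M]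
  rw [Matrix.det_succ_column_zero] at hM
  have hsub : ∀ j : Fin (b + 2), (M.submatrix j.succAbove Fin.succ) =
      Matrix.vandermonde (fun i : Fin (b + 1) => - x ((j.succAbove i : ℕ) + 1)) := by
    intro j
    ext i k
    simp [M, Matrix.vandermonde_apply]
  simp only [hsub, det_deleted_eq] at hM
  rw [← Finset.Ico_add_one_right_eq_Icc, Finset.sum_Ico_eq_sum_range,
    Finset.sum_range, ← neg_eq_zero, ← Finset.sum_neg_distrib, ← hM]
  refine Finset.sum_congr rfl fun j _ => ?_
  simp only [Finset.Ico_add_one_right_eq_Icc, add_comm 1 (j : ℕ), pow_succ]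
  simp [M]
end

section
/- Let N ≥ b+1 and let f := Δ(x_1,…,x_{b+1}) = ∏_{1≤j<k≤b+1}(x_j − x_k) ∈ ℚ[x_1,…,x_N]. For 1 ≤ i ≤ N define the Jucys–Murphy operator on polynomials by ω_i·f := Σ_{j=1}^{i−1} (j,i)·f, where (j,i) ∈ S_N is the transposition of j and i. Then ω_i·f = (1−i)·f for 1 ≤ i ≤ b+1, and ω_i·f = (i−b−1)·f for b+2 ≤ i ≤ N. -/
open Finset MvPolynomial

noncomputable section

/-- The Jucys–Murphy operator `ω_i f = Σ_{j<i} (j,i)·f` applied to `f`. -/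
def jucysMurphy {N : ℕ} (i : Fin N) (f : MvPolynomial (Fin N) ℚ) : MvPolynomial (Fin N) ℚ :=
  ∑ j ∈ Finset.univ.filter (fun j : Fin N => j < i), permAct (Equiv.swap j i) f

lemma card_filter_lt_fin {N : ℕ} (i : Fin N) :
    (Finset.univ.filter (fun j : Fin N => j < i)).card = i := by
  have h : Finset.univ.filter (fun j : Fin N => j < i) = Finset.Iio i := by
    ext j
    simp
  rw [h, Fin.card_Iio]

lemma Delta_eq_det {N b : ℕ} (t : Fin (b + 1) → Fin N) :
    Delta t = (Matrix.vandermonde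
      (fun r => (-X (t r) : MvPolynomial (Fin N) ℚ))).det := by
  rw [Matrix.det_vandermonde, Delta, Finset.prod_filter, Fintype.prod_prod_type]
  refine Finset.prod_congr rfl fun r _ => ?_
  rw [← Finset.prod_filter]
  refine Finset.prod_congr ?_ fun q _ => ?_
  · ext q
    simp
  · ring

lemma permAct_Delta {N b : ℕ} (w : Equiv.Perm (Fin N)) (t : Fin (b + 1) → Fin N) :
    permAct w (Delta t) = Delta (w ∘ t) := by
  simp [permAct, Delta, map_prod]

lemma Delta_comp_perm {N b : ℕ} (t : Fin (b + 1) → Fin N) (s : Equiv.Perm (Fin (b + 1))) :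
    Delta (t ∘ s) = (Equiv.Perm.sign s : ℤ) * Delta t := by
  rw [Delta_eq_det, Delta_eq_det, ← Matrix.det_permute]
  rfl

lemma sum_Delta_update {N b : ℕ} (t : Fin (b + 1) → Fin N) (i : Fin N) :
    ∑ r, Delta (Function.update t r i) = Delta t := by
  have h := congrFun (Matrix.mulVec_cramer
    (Matrix.vandermonde (fun r => (-X (t r) : MvPolynomial (Fin N) ℚ))).transpose
    (fun k => (-X i) ^ (k : ℕ))) 0
  simp only [Matrix.mulVec, dotProduct, Matrix.transpose_apply, Matrix.vandermonde_apply,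
    Fin.val_zero, pow_zero, one_mul, Matrix.det_transpose, Pi.smul_apply, smul_eq_mul,
    mul_one, ← Delta_eq_det] at h
  rw [← h]
  refine Finset.sum_congr rfl fun r _ => ?_
  rw [Matrix.cramer_apply, Delta_eq_det, ← Matrix.det_transpose]
  congr 1
  ext1 a c
  by_cases hc : c = r
  · subst hc
    simp [Matrix.vandermonde_apply]
  · simp [Matrix.vandermonde_apply, hc]

/-- Proposition 3.3: the alternating polynomial `Δ(x_1,…,x_{b+1})` is a simultaneous
eigenfunction of the Jucys–Murphy operators, with eigenvalues the contents of the hook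
tableau `T₀` (stated here in 0-based indexing: the 1-based index `i` corresponds to the
0-based index `i-1`, so the eigenvalue `1-i` reads `-i` and `i-b-1` reads `i-b`). -/
theorem jucysMurphy_Delta (N b : ℕ) (hbN : b + 1 ≤ N)
    (f : MvPolynomial (Fin N) ℚ)
    (hf : f = Delta (fun r : Fin (b + 1) => Fin.castLE hbN r)) (i : Fin N) :
    ((i : ℕ) < b + 1 → jucysMurphy i f = (-(i : ℚ)) • f) ∧
    (b + 1 ≤ (i : ℕ) → jucysMurphy i f = ((i : ℚ) - (b : ℚ)) • f) := by
  subst hf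
  constructor
  · intro hi
    have key : ∀ j ∈ Finset.univ.filter (fun j : Fin N => j < i),
        permAct (Equiv.swap j i) (Delta (fun r : Fin (b + 1) => Fin.castLE hbN r)) =
          - Delta (fun r : Fin (b + 1) => Fin.castLE hbN r) := by
      intro j hj
      have hj' : j < i := by simpa using hj
      have hjv : (j : ℕ) < i := hj'
      have hne : (⟨j, by omega⟩ : Fin (b + 1)) ≠ ⟨i, hi⟩ := by
        intro h
        have := congrArg Fin.val h
        simp at this
        omega
      have hc : (Equiv.swap j i) ∘ (fun r : Fin (b + 1) => Fin.castLE hbN r) =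
          (fun r : Fin (b + 1) => Fin.castLE hbN r) ∘
            (Equiv.swap (⟨j, by omega⟩ : Fin (b + 1)) ⟨i, hi⟩) := by
        funext r
        simp only [Function.comp_apply, Equiv.swap_apply_def, Fin.ext_iff, Fin.val_castLE]
        split_ifs <;> rfl
      rw [permAct_Delta, hc, Delta_comp_perm, Equiv.Perm.sign_swap hne]
      simp
    rw [jucysMurphy, Finset.sum_congr rfl key, Finset.sum_const, card_filter_lt_fin,
      neg_smul, smul_neg, Nat.cast_smul_eq_nsmul]
  · intro hi
    have key : ∀ j : Fin N, b + 1 ≤ (j : ℕ) →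
        permAct (Equiv.swap j i) (Delta (fun r : Fin (b + 1) => Fin.castLE hbN r)) =
          Delta (fun r : Fin (b + 1) => Fin.castLE hbN r) := by
      intro j hj
      rw [permAct_Delta]
      congr 1
      funext r
      have := r.2
      refine Equiv.swap_apply_of_ne_of_ne ?_ ?_ <;>
      · intro h
        have := congrArg Fin.val h
        simp at this
        omega
    have key2 : ∀ r : Fin (b + 1), permAct (Equiv.swap (Fin.castLE hbN r) i)
        (Delta (fun r : Fin (b + 1) => Fin.castLE hbN r)) =
          Delta (Function.update (fun r : Fin (b + 1) => Fin.castLE hbN r) r i) := by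
      intro r
      rw [permAct_Delta]
      congr 1
      funext q
      have := q.2
      by_cases hq : q = r
      · subst hq
        simp
      · rw [Function.update_of_ne hq]
        refine Equiv.swap_apply_of_ne_of_ne ?_ ?_
        · simpa using hq
        · intro h
          have := congrArg Fin.val h
          simp at this
          omega
    have hs1 : (Finset.univ.filter (fun j : Fin N => j < i)).filter
        (fun j : Fin N => (j : ℕ) < b + 1) =
        Finset.univ.map (Fin.castLEEmb hbN) := by
      ext j
      simp only [Finset.mem_filter, Finset.mem_univ, true_and, Finset.mem_map]
      constructor
      · rintro ⟨_, h⟩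
        exact ⟨⟨j, h⟩, rfl⟩
      · rintro ⟨r, rfl⟩
        have := r.2
        refine ⟨?_, this⟩
        rw [Fin.lt_def]
        exact lt_of_lt_of_le this hi
    have hcard := Finset.card_filter_add_card_filter_not
      (s := Finset.univ.filter (fun j : Fin N => j < i)) (fun j : Fin N => (j : ℕ) < b + 1)
    rw [hs1, Finset.card_map, Finset.card_univ, Fintype.card_fin, card_filter_lt_fin] at hcard
    rw [jucysMurphy, ← Finset.sum_filter_add_sum_filter_not _ (fun j : Fin N => (j : ℕ) < b + 1),
      hs1, Finset.sum_map]
    have e1 : ∑ r : Fin (b + 1), permAct (Equiv.swap (Fin.castLEEmb hbN r) i)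
        (Delta (fun r : Fin (b + 1) => Fin.castLE hbN r)) =
        Delta (fun r : Fin (b + 1) => Fin.castLE hbN r) := by
      rw [← sum_Delta_update (fun r : Fin (b + 1) => Fin.castLE hbN r) i]
      refine Finset.sum_congr rfl fun r _ => ?_
      rw [sum_Delta_update]
      exact key2 r
    rw [e1, Finset.sum_congr rfl (fun j hj => key j (by
      have := (Finset.mem_filter.mp hj).2
      omega)), Finset.sum_const, ← Nat.cast_smul_eq_nsmul ℚ]
    have hq := congrArg (Nat.cast : ℕ → ℚ) hcard
    push_cast at hq
    rw [← hq]
    module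

end
end
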